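/- arXiv:1305.1979 — 3 statements merged into one kernel-verified Lean document; each statement's English description precedes it below -/
import Mathlib

section
/- There exists a universal constant C > 0 such that the following holds. Let G and H be projection games, let γ ∈ (0, 1/100] and η ≥ 0. If the collision values satisfy ‖H‖² ≤ 1 − γ and ‖G ⊗ H‖² ≥ 1 − η − γ, then ‖G‖² ≥ 1 − C·(η + √(γη)). -/
open Finset

/-- A projection game: finite nonempty question sets `Q1` (Alice) and `Q2` (Bob),
a finite nonempty alphabet `A`, and a probability mass function `μ` on triples
`(u, v, π)` where `π : A → Option A` encodes a projection constraint
(the answer pair `(α, β)` satisfies `π` iff `π β = some α`). -/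
structure ProjGame where
  Q1 : Type
  Q2 : Type
  A : Type
  [fQ1 : Fintype Q1]
  [fQ2 : Fintype Q2]
  [fA : Fintype A]
  [neQ1 : Nonempty Q1]
  [neQ2 : Nonempty Q2]
  [neA : Nonempty A]
  [dQ1 : DecidableEq Q1]
  [dQ2 : DecidableEq Q2]
  [dA : DecidableEq A]
  μ : Q1 × Q2 × (A → Option A) → ℝ
  μ_nonneg : ∀ x, 0 ≤ μ x
  μ_sum : ∑ x, μ x = 1

attribute [instance] ProjGame.fQ1 ProjGame.fQ2 ProjGame.fA
  ProjGame.neQ1 ProjGame.neQ2 ProjGame.neA ProjGame.dQ1 ProjGame.dQ2 ProjGame.dA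

namespace ProjGame

variable (G : ProjGame)

/-- The `U`-marginal (Alice-side marginal) of `μ`. -/
noncomputable def wU (u : G.Q1) : ℝ := ∑ v, ∑ π, G.μ (u, v, π)

/-- The `V`-marginal (Bob-side marginal) of `μ`. -/
noncomputable def wV (v : G.Q2) : ℝ := ∑ u, ∑ π, G.μ (u, v, π)

/-- The game operator: `(Gf)(u,α) = E_{(v,π)|u} [∑_{β : π β = some α} f (v,β)]`. -/
noncomputable def op (f : G.Q2 × G.A → ℝ) : G.Q1 × G.A → ℝ :=
  fun p =>
    (∑ v, ∑ π, G.μ (p.1, v, π) * ∑ β, if π β = some p.2 then f (v, β) else 0) / G.wU p.1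

/-- Squared norm on functions on `U × Σ`: `‖g‖² = E_u [∑_α g(u,α)²]`. -/
noncomputable def normUsq (g : G.Q1 × G.A → ℝ) : ℝ := ∑ u, G.wU u * ∑ α, (g (u, α)) ^ 2

/-- Squared norm on functions on `V × Σ`: `‖f‖² = E_v [∑_β f(v,β)²]`. -/
noncomputable def normVsq (f : G.Q2 × G.A → ℝ) : ℝ := ∑ v, G.wV v * ∑ β, (f (v, β)) ^ 2

/-- Inner product `⟨g, g'⟩ = E_u [∑_α g(u,α) g'(u,α)]`. -/
noncomputable def inn (g g' : G.Q1 × G.A → ℝ) : ℝ :=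
  ∑ u, G.wU u * ∑ α, g (u, α) * g' (u, α)

/-- An assignment for Bob. -/
def IsBob (f : G.Q2 × G.A → ℝ) : Prop := (∀ p, 0 ≤ f p) ∧ ∀ v, ∑ β, f (v, β) = 1

/-- An assignment for Alice. -/
def IsAlice (g : G.Q1 × G.A → ℝ) : Prop := (∀ p, 0 ≤ g p) ∧ ∀ u, ∑ α, g (u, α) = 1

/-- The value of the game: `val(G) = max ⟨g, Gf⟩` over assignments. -/
noncomputable def val : ℝ :=
  sSup { x | ∃ f g, G.IsBob f ∧ G.IsAlice g ∧ x = G.inn g (G.op f) }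

/-- The collision value `‖G‖ = max_f ‖Gf‖` over assignments `f` for Bob. -/
noncomputable def collVal : ℝ :=
  sSup { x | ∃ f, G.IsBob f ∧ x = Real.sqrt (G.normUsq (G.op f)) }

/-- Product of projection constraints. -/
def tensorC {A A' : Type} (π : A → Option A) (π' : A' → Option A') :
    A × A' → Option (A × A') :=
  fun b => (π b.1).bind fun a => (π' b.2).map fun a' => (a, a')

/-- The product (parallel repetition) of two projection games. -/
noncomputable def tensor (G H : ProjGame) : ProjGame where
  Q1 := G.Q1 × H.Q1
  Q2 := G.Q2 × H.Q2
  A := G.A × H.A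
  μ := fun x =>
    ∑ y : (G.Q1 × G.Q2 × (G.A → Option G.A)) × (H.Q1 × H.Q2 × (H.A → Option H.A)),
      if ((y.1.1, y.2.1), (y.1.2.1, y.2.2.1), tensorC y.1.2.2 y.2.2.2) = x
      then G.μ y.1 * H.μ y.2 else 0
  μ_nonneg := by
    intro x
    refine Finset.sum_nonneg fun y _ => ?_
    split
    · exact mul_nonneg (G.μ_nonneg _) (H.μ_nonneg _)
    · exact le_refl 0
  μ_sum := by
    rw [Finset.sum_comm]
    simp only [Finset.sum_ite_eq, Finset.mem_univ, if_true]
    rw [Fintype.sum_prod_type]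
    calc (∑ y1, ∑ y2, G.μ y1 * H.μ y2)
        = (∑ y1, G.μ y1) * (∑ y2, H.μ y2) := by rw [Finset.sum_mul_sum]
      _ = 1 := by rw [G.μ_sum, H.μ_sum, mul_one]

/-- `G.iterTensor k` is the `(k+1)`-fold parallel repetition `G^{⊗(k+1)}`. -/
noncomputable def iterTensor (G : ProjGame) : ℕ → ProjGame
  | 0 => G
  | n + 1 => G.tensor (G.iterTensor n)

/-- `val₊(G)`: supremum of values of vector assignments. -/
noncomputable def valPlus (G : ProjGame) : ℝ :=
  sSup { x | ∃ n : ℕ, 0 < n ∧ ∃ f : G.Q2 × G.A → Fin n → ℝ,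
    (∀ p i, 0 ≤ f p i) ∧
    (∀ v, Real.sqrt (∑ i, (∑ β, f (v, β) i) ^ 2) ≤ 1) ∧
    x = Real.sqrt (∑ u, G.wU u * ∑ α, ∑ i, (G.op (fun q => f q i) (u, α)) ^ 2) }

/-- `‖Th‖² = E_v [(∑_β h(v,β))²]`. -/
noncomputable def Tnormsq (G : ProjGame) (h : G.Q2 × G.A → ℝ) : ℝ :=
  ∑ v, G.wV v * (∑ β, h (v, β)) ^ 2

/-- `λ₊(G)`: supremum of `‖Gh‖/‖Th‖` over nonnegative `h` with `‖Th‖ > 0`. -/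
noncomputable def lambdaPlus (G : ProjGame) : ℝ :=
  sSup { x | ∃ h : G.Q2 × G.A → ℝ, (∀ p, 0 ≤ h p) ∧
    0 < Real.sqrt (G.Tnormsq h) ∧
    x = Real.sqrt (G.normUsq (G.op h)) / Real.sqrt (G.Tnormsq h) }

/-- The symmetrized distribution on `V × V` (with the constraints marginalized out). -/
noncomputable def msym (G : ProjGame) (v v' : G.Q2) : ℝ :=
  ∑ u, ((∑ π, G.μ (u, v, π)) * (∑ π', G.μ (u, v', π'))) / G.wU u

/-- `G` is `γ`-expanding: the Markov operator of the symmetrized constraint graph has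
spectral gap at least `γ`, i.e. `|⟨x, Ax⟩| ≤ (1-γ) E_v[x(v)²]` for mean-zero `x`. -/
def IsExpanding (G : ProjGame) (γ : ℝ) : Prop :=
  ∀ x : G.Q2 → ℝ, (∑ v, G.wV v * x v) = 0 →
    |∑ v, ∑ v', G.msym v v' * x v * x v'| ≤ (1 - γ) * ∑ v, G.wV v * (x v) ^ 2

/-- The symmetrized distribution on `(v, v', π, π')`. -/
noncomputable def msymFull (G : ProjGame) (v v' : G.Q2) (π π' : G.A → Option G.A) : ℝ :=
  ∑ u, (G.μ (u, v, π) * G.μ (u, v', π')) / G.wU u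

/-- The value of the assignment `x` in the symmetrized game `G_sym`. -/
noncomputable def symValAssign (G : ProjGame) (x : G.Q2 → G.A) : ℝ :=
  ∑ v, ∑ v', ∑ π, ∑ π', G.msymFull v v' π π' *
    (if ∃ α, π (x v) = some α ∧ π' (x v') = some α then 1 else 0)

/-- The value of the symmetrized game `G_sym`. -/
noncomputable def symVal (G : ProjGame) : ℝ :=
  sSup { r | ∃ x : G.Q2 → G.A, r = G.symValAssign x }

end ProjGame

/-! Let `F` be an optimal assignment for `G ⊗ H`. Applying the operator of `H` to the second
components of `F` yields a nonnegative vector assignment for `G` in `L²(J, ρ)`, where `J` is the set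
of question-answer pairs of Alice in `H`. Fixing Bob's question `v` in `G` leaves an assignment for
`H`, so the mass vector at `v` has squared norm at most `‖H‖² ≤ 1 - γ`, whereas the value of the
vector assignment is `‖G ⊗ H‖² ≥ 1 - η - γ`. Since the agreement on a constraint pair is at most the
inner product of the two mass vectors, these differ on average by at most `2η` in squared norm;
moreover their entries are nearly `0` or `1`: the average of `x(1 - x)` is at most `γ + η`.

As in Cheeger's inequality, a threshold `t ∈ (1/2, 3/4]` cuts few pairs: a pair `x, y` is cut with
probability of order `|x - y|`, and this is possible only if `|x - y|` or `√(x(1 - x) + y(1 - y))`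
is bounded below, so the probability is `O((x - y)² + |x - y| √(x(1 - x) + y(1 - y)))`. By
Cauchy–Schwarz the average of this bound is `O(η + √(η(γ + η)))`, the source of `√(γη)`.
The sets `{v | t ≤ mass of coordinate j at v}` are clusters that cover almost every question with
`ρ`-weight at least `1/2`. A greedy version of correlated sampling selects one cluster, that is one
coordinate of the vector assignment, for each question such that few pairs are separated;
normalising the selected coordinates gives the assignment for Bob in `G`.
-/

section Threshold

open MeasureTheory

lemma exists_threshold_sum_indicator_uIoc_le {K : Type*} [Fintype K] (w x y : K → ℝ) {a b : ℝ}
    (hab : a < b) :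
    ∃ t ∈ Set.Ioc a b, ∑ k, w k * (Set.uIoc (x k) (y k)).indicator 1 t ≤
      (b - a)⁻¹ * ∑ k, w k * volume.real (Set.Ioc a b ∩ Set.uIoc (x k) (y k)) := by
  have hint (k : K) :
      IntegrableOn (fun t ↦ w k * (Set.uIoc (x k) (y k)).indicator 1 t) (Set.Ioc a b) :=
    ((integrable_const 1).indicator measurableSet_uIoc).const_mul _
  have hvol : volume (Set.Ioc a b) ≠ 0 := by simp [hab]
  obtain ⟨t, ht, hle⟩ := exists_le_setAverage hvol measure_Ioc_lt_top.ne
    (integrable_finsetSum univ fun k _ ↦ hint k)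
  refine ⟨t, ht, hle.trans_eq ?_⟩
  rw [setAverage_eq, Real.volume_real_Ioc_of_le hab.le, integral_finsetSum _ fun k _ ↦ hint k,
    smul_eq_mul]
  congr 1
  refine sum_congr rfl fun k _ ↦ ?_
  rw [integral_const_mul, setIntegral_indicator measurableSet_uIoc]
  simp

lemma one_le_dist_add_sqrt_of_mem_uIoc {x y t : ℝ} (hx : x ∈ Set.Icc (0 : ℝ) 1)
    (hy : y ∈ Set.Icc (0 : ℝ) 1) (ht : t ∈ Set.Ioc (1 / 2 : ℝ) (3 / 4))
    (hxy : t ∈ Set.uIoc x y) :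
    1 ≤ 8 * |x - y| + 4 * √(x * (1 - x) + y * (1 - y)) := by
  wlog h : x ≤ y generalizing x y
  · rw [abs_sub_comm, add_comm (x * _)]
    exact this hy hx (Set.uIoc_comm x y ▸ hxy) (le_of_not_ge h)
  rw [Set.uIoc_of_le h] at hxy
  rw [abs_sub_comm, abs_of_nonneg (sub_nonneg.2 h)]
  rcases le_total y (7 / 8) with hy' | hy'
  · have : 1 / 4 ≤ √(x * (1 - x) + y * (1 - y)) := by
      refine Real.le_sqrt_of_sq_le ?_
      nlinarith [mul_nonneg hx.1 (sub_nonneg.2 hx.2), hxy.2, ht.1]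
    linarith
  · have := Real.sqrt_nonneg (x * (1 - x) + y * (1 - y))
    linarith [hxy.1, ht.2]

lemma volume_real_Ioc_inter_uIoc_le {x y : ℝ} (hx : x ∈ Set.Icc (0 : ℝ) 1)
    (hy : y ∈ Set.Icc (0 : ℝ) 1) :
    volume.real (Set.Ioc (1 / 2 : ℝ) (3 / 4) ∩ Set.uIoc x y) ≤
      8 * (x - y) ^ 2 + 4 * (|x - y| * √(x * (1 - x) + y * (1 - y))) := by
  rcases (Set.Ioc (1 / 2 : ℝ) (3 / 4) ∩ Set.uIoc x y).eq_empty_or_nonempty with h | ⟨t, ht, hxy⟩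
  · rw [h, measureReal_empty]
    positivity
  · calc volume.real (Set.Ioc (1 / 2 : ℝ) (3 / 4) ∩ Set.uIoc x y)
        ≤ volume.real (Set.uIoc x y) := measureReal_mono Set.inter_subset_right (by simp)
      _ = |x - y| := by rw [measureReal_def, Real.volume_uIoc, abs_sub_comm]; simp
      _ ≤ |x - y| * (8 * |x - y| + 4 * √(x * (1 - x) + y * (1 - y))) :=
        le_mul_of_one_le_right (abs_nonneg _) (one_le_dist_add_sqrt_of_mem_uIoc hx hy ht hxy)
      _ = _ := by rw [← sq_abs (x - y)]; ring

lemma sum_mul_abs_mul_sqrt_le {K : Type*} [Fintype K] {w d s : K → ℝ} (hw : ∀ k, 0 ≤ w k)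
    (hs : ∀ k, 0 ≤ s k) :
    ∑ k, w k * (|d k| * √(s k)) ≤ √(∑ k, w k * d k ^ 2) * √(∑ k, w k * s k) := by
  calc ∑ k, w k * (|d k| * √(s k)) = ∑ k, √(w k * d k ^ 2) * √(w k * s k) := by
        refine sum_congr rfl fun k _ ↦ ?_
        rw [Real.sqrt_mul (hw k), Real.sqrt_mul (hw k), Real.sqrt_sq_eq_abs,
          mul_mul_mul_comm, Real.mul_self_sqrt (hw k)]
    _ ≤ _ := Real.sum_sqrt_mul_sqrt_le univ (fun k ↦ mul_nonneg (hw k) (sq_nonneg _))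
        fun k ↦ mul_nonneg (hw k) (hs k)

lemma exists_threshold_sum_indicator_uIoc_le_of_mem_Icc {K : Type*} [Fintype K] {w x y : K → ℝ}
    (hw : ∀ k, 0 ≤ w k) (hx : ∀ k, x k ∈ Set.Icc (0 : ℝ) 1) (hy : ∀ k, y k ∈ Set.Icc (0 : ℝ) 1) :
    ∃ t ∈ Set.Ioc (1 / 2 : ℝ) (3 / 4), ∑ k, w k * (Set.uIoc (x k) (y k)).indicator 1 t ≤
      32 * ∑ k, w k * (x k - y k) ^ 2 + 16 * (√(∑ k, w k * (x k - y k) ^ 2) *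
        √(∑ k, w k * (x k * (1 - x k) + y k * (1 - y k)))) := by
  have hs (k : K) : 0 ≤ x k * (1 - x k) + y k * (1 - y k) :=
    add_nonneg (mul_nonneg (hx k).1 (sub_nonneg.2 (hx k).2))
      (mul_nonneg (hy k).1 (sub_nonneg.2 (hy k).2))
  obtain ⟨t, ht, hle⟩ :=
    exists_threshold_sum_indicator_uIoc_le w x y (by norm_num : (1 / 2 : ℝ) < 3 / 4)
  refine ⟨t, ht, hle.trans ?_⟩
  have hlen := sum_le_sum fun k (_ : k ∈ univ) ↦
    mul_le_mul_of_nonneg_left (volume_real_Ioc_inter_uIoc_le (hx k) (hy k)) (hw k)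
  have hsplit : ∑ k, w k * (8 * (x k - y k) ^ 2 +
      4 * (|x k - y k| * √(x k * (1 - x k) + y k * (1 - y k)))) =
      8 * ∑ k, w k * (x k - y k) ^ 2 +
        4 * ∑ k, w k * (|x k - y k| * √(x k * (1 - x k) + y k * (1 - y k))) := by
    simp only [mul_add, sum_add_distrib, mul_sum, mul_left_comm]
  linarith [sum_mul_abs_mul_sqrt_le (d := fun k ↦ x k - y k) hw hs]

end Threshold

section Clustering

variable {V P J : Type*}

/-- The cost of a pair `p` with endpoints `s p`, `t p` under the clustering `σ`: the cost of `p`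
inside the cluster that contains both endpoints, and `1` if `σ` separates them. -/
noncomputable def clusterCost (s t : P → V) (c : J → P → ℝ) (σ : V → J) (p : P) : ℝ :=
  open Classical in if σ (s p) = σ (t p) then c (σ (s p)) p else 1

variable {s t : P → V} {B : J → Set V} {c : J → P → ℝ}

open Classical in
lemma clusterCost_ite_le {j : J} {σ : V → J} {p : P}
    (hsep : ¬(s p ∈ B j ↔ t p ∈ B j) → 1 ≤ c j p)
    (hs : s p ∉ B j → s p ∈ B (σ (s p))) (ht : t p ∉ B j → t p ∈ B (σ (t p)))
    (hp : s p ∈ B j ∨ t p ∈ B j) :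
    clusterCost s t c (fun v ↦ if v ∈ B j then j else σ v) p ≤ c j p := by
  by_cases hsj : s p ∈ B j <;> by_cases htj : t p ∈ B j
  · simp [clusterCost, hsj, htj]
  · have hne : j ≠ σ (t p) := fun h ↦ htj (h ▸ ht htj)
    simpa [clusterCost, hsj, htj, hne] using hsep
  · have hne : σ (s p) ≠ j := fun h ↦ hsj (h ▸ hs hsj)
    simpa [clusterCost, hsj, htj, hne] using hsep
  · exact absurd hp (by simp [hsj, htj])

variable [Fintype J] {W : P → ℝ} {ρ : J → ℝ} {θ : ℝ} {S : Finset V} {E : Finset P}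

open Classical in
lemma le_sum_mul_sum_touching {M : P → ℝ} (hM : ∀ p, 0 ≤ M p) (hρ : ∀ j, 0 ≤ ρ j)
    (hcov : ∀ p ∈ E, θ ≤ ∑ j with s p ∈ B j, ρ j) :
    θ * ∑ p ∈ E, M p ≤ ∑ j, ρ j * ∑ p ∈ E with s p ∈ B j ∨ t p ∈ B j, M p := by
  simp only [mul_sum, sum_filter]
  rw [sum_comm]
  refine sum_le_sum fun p hp ↦ ?_
  calc θ * M p ≤ (∑ j with s p ∈ B j, ρ j) * M p :=
        mul_le_mul_of_nonneg_right (hcov p hp) (hM p)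
    _ ≤ (∑ j with s p ∈ B j ∨ t p ∈ B j, ρ j) * M p :=
        mul_le_mul_of_nonneg_right (sum_le_sum_of_subset_of_nonneg
          (monotone_filter_right _ fun _ _ ↦ Or.inl) fun j _ _ ↦ hρ j) (hM p)
    _ = _ := by simp only [sum_filter, sum_mul, ite_mul, zero_mul, mul_ite, mul_zero]

open Classical in
lemma exists_cluster_sum_touching_le (hW : ∀ p, 0 ≤ W p) (hρ : ∀ j, 0 ≤ ρ j)
    (hc : ∀ j p, 0 ≤ c j p) (hθ : 0 < θ) (hS : S.Nonempty)
    (hcov : ∀ v ∈ S, θ ≤ ∑ j with v ∈ B j, ρ j) (hE : ∀ p ∈ E, s p ∈ S ∧ t p ∈ S) :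
    ∃ j, (∃ v ∈ S, v ∈ B j) ∧
      θ * ∑ p ∈ E with s p ∈ B j ∨ t p ∈ B j, W p * c j p ≤
        ∑ p ∈ E with s p ∈ B j ∨ t p ∈ B j, W p * ∑ i, ρ i * c i p := by
  set T : J → Finset P := fun j ↦ {p ∈ E | s p ∈ B j ∨ t p ∈ B j}
  set M : P → ℝ := fun p ↦ W p * ∑ i, ρ i * c i p
  have hM (p : P) : 0 ≤ M p :=
    mul_nonneg (hW p) (sum_nonneg fun i _ ↦ mul_nonneg (hρ i) (hc i p))
  set R : Finset J := {j | 0 < ρ j ∧ ∃ v ∈ S, v ∈ B j}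
  have hR : R.Nonempty := by
    obtain ⟨v, hv⟩ := hS
    obtain ⟨j, hvj, hpos⟩ :=
      (sum_pos_iff_of_nonneg fun j _ ↦ hρ j).1 (hθ.trans_le (hcov v hv))
    exact ⟨j, mem_filter.2 ⟨mem_univ j, hpos, v, hv, (mem_filter.1 hvj).2⟩⟩
  have hTR (j : J) (hj : j ∉ R) : ρ j * ∑ p ∈ T j, M p = 0 := by
    by_cases hρj : 0 < ρ j
    · have hempty : T j = ∅ := filter_eq_empty_iff.2 fun p hp htouch ↦ hj <|
        mem_filter.2 ⟨mem_univ j, hρj, htouch.elim (⟨_, (hE p hp).1, ·⟩) (⟨_, (hE p hp).2, ·⟩)⟩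
      rw [hempty, sum_empty, mul_zero]
    · rw [le_antisymm (not_lt.1 hρj) (hρ j), zero_mul]
  have havg : ∑ j ∈ R, ρ j * (θ * ∑ p ∈ T j, W p * c j p) ≤ ∑ j ∈ R, ρ j * ∑ p ∈ T j, M p :=
    calc ∑ j ∈ R, ρ j * (θ * ∑ p ∈ T j, W p * c j p)
        ≤ ∑ j, ρ j * (θ * ∑ p ∈ E, W p * c j p) := by
          have hWc (j : J) (p : P) : 0 ≤ W p * c j p := mul_nonneg (hW p) (hc j p)
          refine (sum_le_sum fun j _ ↦ mul_le_mul_of_nonneg_left (mul_le_mul_of_nonneg_left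
            (sum_le_sum_of_subset_of_nonneg (filter_subset _ _) fun p _ _ ↦ hWc j p) hθ.le)
            (hρ j)).trans (sum_le_sum_of_subset_of_nonneg (subset_univ R) fun j _ _ ↦ ?_)
          exact mul_nonneg (hρ j) (mul_nonneg hθ.le (sum_nonneg fun p _ ↦ hWc j p))
      _ = θ * ∑ p ∈ E, M p := by
          simp only [M, mul_sum]
          rw [sum_comm]
          exact sum_congr rfl fun p _ ↦ sum_congr rfl fun j _ ↦ by ring
      _ ≤ ∑ j, ρ j * ∑ p ∈ T j, M p :=
          le_sum_mul_sum_touching hM hρ fun p hp ↦ hcov _ (hE p hp).1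
      _ = ∑ j ∈ R, ρ j * ∑ p ∈ T j, M p :=
          (sum_subset (subset_univ R) fun j _ hj ↦ hTR j hj).symm
  obtain ⟨j, hj, hle⟩ := exists_le_of_sum_le hR havg
  obtain ⟨-, hpos, hv⟩ := mem_filter.1 hj
  exact ⟨j, hv, le_of_mul_le_mul_left hle hpos⟩

open Classical in
-- Greedy form of correlated sampling: carve off a cluster whose touching pairs are cheap, recurse.
theorem exists_clustering_sum_clusterCost_le [Nonempty J] (hW : ∀ p, 0 ≤ W p)
    (hρ : ∀ j, 0 ≤ ρ j) (hc : ∀ j p, 0 ≤ c j p)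
    (hsep : ∀ j p, ¬(s p ∈ B j ↔ t p ∈ B j) → 1 ≤ c j p) (hθ : 0 < θ)
    (hcov : ∀ v ∈ S, θ ≤ ∑ j with v ∈ B j, ρ j) (hE : ∀ p ∈ E, s p ∈ S ∧ t p ∈ S) :
    ∃ σ : V → J, (∀ v ∈ S, v ∈ B (σ v)) ∧
      θ * ∑ p ∈ E, W p * clusterCost s t c σ p ≤ ∑ p ∈ E, W p * ∑ j, ρ j * c j p := by
  induction S using Finset.strongInduction generalizing E with
  | H S ih =>
    rcases S.eq_empty_or_nonempty with rfl | hS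
    · obtain rfl : E = ∅ := eq_empty_of_forall_notMem fun p hp ↦ by simpa using (hE p hp).1
      exact ⟨fun _ ↦ Classical.arbitrary J, by simp, by simp⟩
    obtain ⟨j, ⟨v, hv, hvj⟩, hj⟩ := exists_cluster_sum_touching_le hW hρ hc hθ hS hcov hE
    have hssub : {v ∈ S | v ∉ B j} ⊂ S := filter_ssubset.2 ⟨v, hv, by simpa using hvj⟩
    have hfar (p : P) (hp : p ∈ E.filter fun p ↦ ¬(s p ∈ B j ∨ t p ∈ B j)) :
        s p ∈ S.filter (· ∉ B j) ∧ t p ∈ S.filter (· ∉ B j) := by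
      obtain ⟨hpE, hpj⟩ := mem_filter.1 hp
      exact ⟨mem_filter.2 ⟨(hE p hpE).1, fun h ↦ hpj (.inl h)⟩,
        mem_filter.2 ⟨(hE p hpE).2, fun h ↦ hpj (.inr h)⟩⟩
    obtain ⟨σ, hσ, hσcost⟩ := ih _ hssub (fun v hv ↦ hcov v (mem_filter.1 hv).1) hfar
    have hσ' (v : V) (hv : v ∈ S) (hvj : v ∉ B j) : v ∈ B (σ v) := hσ v (mem_filter.2 ⟨hv, hvj⟩)
    refine ⟨fun v ↦ if v ∈ B j then j else σ v, fun v hv ↦ ?_, ?_⟩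
    · dsimp only
      split_ifs with h
      exacts [h, hσ' v hv h]
    rw [← sum_filter_add_sum_filter_not E fun p ↦ s p ∈ B j ∨ t p ∈ B j,
      ← sum_filter_add_sum_filter_not E fun p ↦ s p ∈ B j ∨ t p ∈ B j, mul_add]
    refine add_le_add (hj.trans' ?_) (hσcost.trans_eq' ?_)
    · refine mul_le_mul_of_nonneg_left (sum_le_sum fun p hp ↦ ?_) hθ.le
      obtain ⟨hpE, hpj⟩ := mem_filter.1 hp
      exact mul_le_mul_of_nonneg_left (clusterCost_ite_le (hsep j p) (hσ' _ (hE p hpE).1)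
        (hσ' _ (hE p hpE).2) hpj) (hW p)
    · congr 1
      refine sum_congr rfl fun p hp ↦ ?_
      obtain ⟨hsj, htj⟩ := not_or.1 (mem_filter.1 hp).2
      simp [clusterCost, hsj, htj]

end Clustering

namespace ProjGame

section Operator

/-- Bob's side of the randomness: a question `v` together with the constraint `π` that comes
with it. -/
abbrev Constraint (G : ProjGame) : Type := G.Q2 × (G.A → Option G.A)

variable (G : ProjGame)

/-- The conditional probability of `(v, π)` given `u`; it is `0` if `u` has probability `0`. -/
noncomputable def condProb (u : G.Q1) (e : G.Constraint) : ℝ := G.μ (u, e) / G.wU u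

/-- The weight `∑_β f(v, β)` that `f` puts on the question `v`, i.e. the operator `T`. -/
noncomputable def mass (f : G.Q2 × G.A → ℝ) (v : G.Q2) : ℝ := ∑ β, f (v, β)

/-- The pushforward of `f(v, ·)` along the partial map `π`, where `e = (v, π)`. -/
noncomputable def induced (f : G.Q2 × G.A → ℝ) (e : G.Constraint) (α : G.A) : ℝ :=
  ∑ β, if e.2 β = some α then f (e.1, β) else 0

/-- The probability that `G_sym` asks for the pair `p` of constraints, curried in `msymFull`. -/
noncomputable def pairWeight (p : G.Constraint × G.Constraint) : ℝ :=
  G.msymFull p.1.1 p.2.1 p.1.2 p.2.2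

/-- The probability that answers drawn from `f` to the two questions of `p` are mapped to the same
element of the alphabet. -/
noncomputable def agreement (f : G.Q2 × G.A → ℝ) (p : G.Constraint × G.Constraint) : ℝ :=
  ∑ α, G.induced f p.1 α * G.induced f p.2 α

variable {G} {f : G.Q2 × G.A → ℝ}

lemma wU_nonneg (u : G.Q1) : 0 ≤ G.wU u :=
  sum_nonneg fun _ _ ↦ sum_nonneg fun _ _ ↦ G.μ_nonneg _

lemma wU_eq_sum (u : G.Q1) : G.wU u = ∑ e : G.Constraint, G.μ (u, e) :=
  (Fintype.sum_prod_type fun e : G.Constraint ↦ G.μ (u, e)).symm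

lemma sum_wU : ∑ u, G.wU u = 1 := by
  simp only [wU_eq_sum, ← G.μ_sum, Fintype.sum_prod_type]

lemma condProb_nonneg (u : G.Q1) (e : G.Constraint) : 0 ≤ G.condProb u e :=
  div_nonneg (G.μ_nonneg _) (wU_nonneg u)

lemma sum_condProb (u : G.Q1) : ∑ e, G.condProb u e = G.wU u / G.wU u := by
  simp only [condProb, ← sum_div, wU_eq_sum]

lemma op_apply (u : G.Q1) (α : G.A) :
    G.op f (u, α) = ∑ e, G.condProb u e * G.induced f e α := by
  simp only [condProb, div_mul_eq_mul_div, ← sum_div, Fintype.sum_prod_type]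
  rfl

lemma mass_nonneg (hf : ∀ q, 0 ≤ f q) (v : G.Q2) : 0 ≤ G.mass f v := sum_nonneg fun _ _ ↦ hf _

lemma induced_nonneg (hf : ∀ q, 0 ≤ f q) (e : G.Constraint) (α : G.A) : 0 ≤ G.induced f e α :=
  sum_nonneg fun _ _ ↦ ite_nonneg (hf _) le_rfl

lemma sum_induced_le_mass (hf : ∀ q, 0 ≤ f q) (e : G.Constraint) :
    ∑ α, G.induced f e α ≤ G.mass f e.1 := by
  simp only [induced, mass]
  rw [sum_comm]
  refine sum_le_sum fun β _ ↦ ?_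
  rcases e.2 β with _ | α
  · simpa using hf _
  · simp

lemma op_nonneg (hf : ∀ q, 0 ≤ f q) (p : G.Q1 × G.A) : 0 ≤ G.op f p := by
  rw [op_apply]
  exact sum_nonneg fun e _ ↦ mul_nonneg (condProb_nonneg _ e) (induced_nonneg hf e _)

lemma sum_op_le_one (hf : G.IsBob f) (u : G.Q1) : ∑ α, G.op f (u, α) ≤ 1 :=
  calc ∑ α, G.op f (u, α) = ∑ e, G.condProb u e * ∑ α, G.induced f e α := by
        simp only [op_apply, mul_sum]
        exact sum_comm
    _ ≤ ∑ e, G.condProb u e * 1 := sum_le_sum fun e _ ↦ mul_le_mul_of_nonneg_left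
        ((sum_induced_le_mass hf.1 e).trans (hf.2 e.1).le) (condProb_nonneg u e)
    _ = G.wU u / G.wU u := by simp only [mul_one, sum_condProb]
    _ ≤ 1 := div_self_le_one _

lemma op_le_one (hf : G.IsBob f) (p : G.Q1 × G.A) : G.op f p ≤ 1 :=
  (single_le_sum (f := fun α ↦ G.op f (p.1, α)) (fun _ _ ↦ op_nonneg hf.1 _)
    (mem_univ p.2)).trans (sum_op_le_one hf p.1)

lemma induced_sum {ι : Type*} [Fintype ι] (g : ι → G.Q2 × G.A → ℝ) (e : G.Constraint) (α : G.A) :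
    G.induced (fun q ↦ ∑ i, g i q) e α = ∑ i, G.induced (g i) e α := by
  simp only [induced]
  rw [sum_comm]
  exact sum_congr rfl fun β _ ↦ by split_ifs <;> simp

lemma induced_const_mul (c : ℝ) (f : G.Q2 × G.A → ℝ) (e : G.Constraint) (α : G.A) :
    G.induced (fun q ↦ c * f q) e α = c * G.induced f e α := by
  simp only [induced, mul_sum, mul_ite, mul_zero]

lemma op_sum {ι : Type*} [Fintype ι] (g : ι → G.Q2 × G.A → ℝ) (p : G.Q1 × G.A) :
    G.op (fun q ↦ ∑ i, g i q) p = ∑ i, G.op (g i) p := by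
  obtain ⟨u, α⟩ := p
  simp only [op_apply, induced_sum, mul_sum]
  exact sum_comm

lemma normUsq_nonneg (g : G.Q1 × G.A → ℝ) : 0 ≤ G.normUsq g :=
  sum_nonneg fun u _ ↦ mul_nonneg (wU_nonneg u) (sum_nonneg fun _ _ ↦ sq_nonneg _)

lemma pairWeight_eq_sum (p : G.Constraint × G.Constraint) :
    G.pairWeight p = ∑ u, G.wU u * (G.condProb u p.1 * G.condProb u p.2) := by
  refine sum_congr rfl fun u _ ↦ ?_
  rcases eq_or_ne (G.wU u) 0 with h | h
  · simp [h]
  · simp only [condProb]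
    field_simp

lemma pairWeight_nonneg (p : G.Constraint × G.Constraint) : 0 ≤ G.pairWeight p := by
  rw [pairWeight_eq_sum]
  exact sum_nonneg fun u _ ↦
    mul_nonneg (wU_nonneg u) (mul_nonneg (condProb_nonneg u _) (condProb_nonneg u _))

lemma sum_pairWeight_mul_mul (x : G.Constraint → ℝ) :
    ∑ p, G.pairWeight p * (x p.1 * x p.2) = ∑ u, G.wU u * (∑ e, G.condProb u e * x e) ^ 2 := by
  simp only [pairWeight_eq_sum, sum_mul]
  rw [sum_comm]
  refine sum_congr rfl fun u _ ↦ ?_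
  rw [sq, Fintype.sum_mul_sum, ← Fintype.sum_prod_type', mul_sum]
  exact sum_congr rfl fun p _ ↦ by ring

lemma sum_pairWeight : ∑ p, G.pairWeight p = 1 := by
  have h := G.sum_pairWeight_mul_mul fun _ ↦ 1
  simp only [mul_one, sum_condProb] at h
  rw [h, ← G.sum_wU]
  refine sum_congr rfl fun u _ ↦ ?_
  rcases eq_or_ne (G.wU u) 0 with h | h <;> simp [h]

lemma normUsq_op (f : G.Q2 × G.A → ℝ) :
    G.normUsq (G.op f) = ∑ p, G.pairWeight p * G.agreement f p := by
  simp only [normUsq, op_apply, agreement, mul_sum]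
  rw [sum_comm, sum_comm (s := univ (α := G.Constraint × G.Constraint))]
  exact sum_congr rfl fun α _ ↦ (sum_pairWeight_mul_mul fun e ↦ G.induced f e α).symm

end Operator

section CollisionValue

variable {G : ProjGame}

lemma exists_isBob : ∃ f, G.IsBob f :=
  ⟨fun _ ↦ (Fintype.card G.A : ℝ)⁻¹, fun _ ↦ by positivity, fun _ ↦ by simp⟩

lemma isCompact_setOf_isBob : IsCompact {f | G.IsBob f} := by
  refine (isCompact_Icc (a := (0 : G.Q2 × G.A → ℝ)) (b := 1)).of_isClosed_subset ?_ ?_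
  · simp only [IsBob, Set.ofPred_and, Set.ofPred_forall]
    refine (isClosed_iInter fun p ↦ ?_).inter (isClosed_iInter fun v ↦ ?_)
    · exact isClosed_le continuous_const (continuous_apply p)
    · exact isClosed_eq (by fun_prop) continuous_const
  · exact fun f hf ↦ ⟨hf.1, fun q ↦ (single_le_sum (f := fun β ↦ f (q.1, β))
      (fun _ _ ↦ hf.1 _) (mem_univ q.2)).trans_eq (hf.2 q.1)⟩

lemma continuous_normUsq_op : Continuous fun f ↦ G.normUsq (G.op f) := by
  simp only [normUsq, op_apply, induced, ← sum_filter]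
  fun_prop

theorem isGreatest_collVal_sq :
    IsGreatest ((fun f ↦ G.normUsq (G.op f)) '' {f | G.IsBob f}) (G.collVal ^ 2) := by
  obtain ⟨f, hf, hmax⟩ :=
    isCompact_setOf_isBob.exists_isMaxOn exists_isBob G.continuous_normUsq_op.continuousOn
  have hval : G.collVal ^ 2 = G.normUsq (G.op f) := by
    have : IsGreatest {x | ∃ f, G.IsBob f ∧ x = √(G.normUsq (G.op f))} √(G.normUsq (G.op f)) :=
      ⟨⟨f, hf, rfl⟩, by rintro _ ⟨g, hg, rfl⟩; exact Real.sqrt_le_sqrt (hmax hg)⟩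
    rw [collVal, this.csSup_eq, Real.sq_sqrt (normUsq_nonneg _)]
  exact hval ▸ ⟨⟨f, hf, rfl⟩, by rintro _ ⟨g, hg, rfl⟩; exact hmax hg⟩

end CollisionValue

section Agreement

variable {G : ProjGame} {f : G.Q2 × G.A → ℝ}

/-- How much the agreement of `f` on the pair `p` falls short of the average of the squared masses
at its two questions. -/
noncomputable def defect (G : ProjGame) (f : G.Q2 × G.A → ℝ) (p : G.Constraint × G.Constraint) :
    ℝ :=
  (G.mass f p.1.1 ^ 2 + G.mass f p.2.1 ^ 2) / 2 - G.agreement f p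

lemma agreement_nonneg (hf : ∀ q, 0 ≤ f q) (p : G.Constraint × G.Constraint) :
    0 ≤ G.agreement f p :=
  sum_nonneg fun α _ ↦ mul_nonneg (induced_nonneg hf _ α) (induced_nonneg hf _ α)

lemma agreement_le_mass_mul_mass (hf : ∀ q, 0 ≤ f q) (p : G.Constraint × G.Constraint) :
    G.agreement f p ≤ G.mass f p.1.1 * G.mass f p.2.1 :=
  calc G.agreement f p ≤ ∑ α, G.induced f p.1 α * G.mass f p.2.1 :=
        sum_le_sum fun α _ ↦ mul_le_mul_of_nonneg_left
          ((single_le_sum (fun α _ ↦ induced_nonneg hf p.2 α) (mem_univ α)).trans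
            (sum_induced_le_mass hf p.2)) (induced_nonneg hf _ α)
    _ ≤ G.mass f p.1.1 * G.mass f p.2.1 := by
        rw [← sum_mul]
        exact mul_le_mul_of_nonneg_right (sum_induced_le_mass hf p.1) (mass_nonneg hf _)

lemma sq_mass_sub_mass_le_defect (hf : ∀ q, 0 ≤ f q) (p : G.Constraint × G.Constraint) :
    (G.mass f p.1.1 - G.mass f p.2.1) ^ 2 ≤ 2 * G.defect f p := by
  rw [defect]
  linarith [agreement_le_mass_mul_mass hf p]

lemma defect_nonneg (hf : ∀ q, 0 ≤ f q) (p : G.Constraint × G.Constraint) : 0 ≤ G.defect f p := by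
  linarith [sq_nonneg (G.mass f p.1.1 - G.mass f p.2.1), sq_mass_sub_mass_le_defect hf p]

lemma one_sub_defect_le_agreement_div (hf : ∀ q, 0 ≤ f q) {p : G.Constraint × G.Constraint}
    (h₁ : 1 / 2 ≤ G.mass f p.1.1) (h₂ : 1 / 2 ≤ G.mass f p.2.1) :
    1 - 4 * G.defect f p ≤ G.agreement f p / (G.mass f p.1.1 * G.mass f p.2.1) := by
  have hmm : 1 / 4 ≤ G.mass f p.1.1 * G.mass f p.2.1 := by nlinarith
  have hdef : G.mass f p.1.1 * G.mass f p.2.1 - G.agreement f p ≤ G.defect f p := by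
    rw [defect]
    linarith [sq_nonneg (G.mass f p.1.1 - G.mass f p.2.1)]
  rw [le_div_iff₀ (by linarith)]
  nlinarith [mul_nonneg (sub_nonneg.2 hmm) (defect_nonneg hf p)]

/-- The assignment for Bob obtained from a nonnegative `f` by normalising `f(v, ·)` for every `v`,
with the uniform distribution where `f(v, ·)` vanishes. -/
noncomputable def normalize (G : ProjGame) (f : G.Q2 × G.A → ℝ) : G.Q2 × G.A → ℝ := fun q ↦
  if G.mass f q.1 = 0 then (Fintype.card G.A : ℝ)⁻¹ else f q / G.mass f q.1

lemma isBob_normalize (hf : ∀ q, 0 ≤ f q) : G.IsBob (G.normalize f) := by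
  refine ⟨fun q ↦ ite_nonneg (by positivity) (div_nonneg (hf q) (mass_nonneg hf _)), fun v ↦ ?_⟩
  by_cases h : G.mass f v = 0
  · simp [normalize, h]
  · simp only [normalize, h, if_false, ← sum_div]
    exact div_self h

lemma induced_normalize {e : G.Constraint} (h : G.mass f e.1 ≠ 0) (α : G.A) :
    G.induced (G.normalize f) e α = G.induced f e α / G.mass f e.1 := by
  simp only [induced, normalize, h, if_false, sum_div, ite_div, zero_div]

lemma agreement_normalize {p : G.Constraint × G.Constraint} (h₁ : G.mass f p.1.1 ≠ 0)
    (h₂ : G.mass f p.2.1 ≠ 0) :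
    G.agreement (G.normalize f) p = G.agreement f p / (G.mass f p.1.1 * G.mass f p.2.1) := by
  simp only [agreement, induced_normalize h₁, induced_normalize h₂, div_mul_div_comm, sum_div]

end Agreement

section VectorAssignment

variable {G : ProjGame} {J : Type*} [Fintype J]

/-- A nonnegative vector assignment for Bob in `L²(J, ρ)`: its values are the vectors
`j ↦ h j (v, β)`, listed coordinate by coordinate. The masses are at most `1` both pointwise in `j`
and in total. -/
structure IsVectorAssignment (G : ProjGame) (ρ : J → ℝ) (h : J → G.Q2 × G.A → ℝ) : Prop where
  weight_nonneg : ∀ j, 0 ≤ ρ j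
  nonneg : ∀ j q, 0 ≤ h j q
  mass_le_one : ∀ j v, G.mass (h j) v ≤ 1
  total_mass_le_one : ∀ v, ∑ j, ρ j * G.mass (h j) v ≤ 1

/-- The squared norm in `L²(J, ρ)` of the mass vector `j ↦ ∑_β h j (v, β)`. -/
noncomputable def sqMass (G : ProjGame) (ρ : J → ℝ) (h : J → G.Q2 × G.A → ℝ) (v : G.Q2) : ℝ :=
  ∑ j, ρ j * G.mass (h j) v ^ 2

/-- The squared norm of the game operator applied to a vector assignment, i.e. its value. -/
noncomputable def vectorValue (G : ProjGame) (ρ : J → ℝ) (h : J → G.Q2 × G.A → ℝ) : ℝ :=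
  ∑ j, ρ j * G.normUsq (G.op (h j))

variable {ρ : J → ℝ} {h : J → G.Q2 × G.A → ℝ} {γ η : ℝ}

lemma sum_pairWeight_mul_sum_defect :
    ∑ p, G.pairWeight p * ∑ j, ρ j * G.defect (h j) p =
      ∑ p, G.pairWeight p * ((G.sqMass ρ h p.1.1 + G.sqMass ρ h p.2.1) / 2) -
        G.vectorValue ρ h := by
  have hval : G.vectorValue ρ h = ∑ p, G.pairWeight p * ∑ j, ρ j * G.agreement (h j) p := by
    simp only [vectorValue, normUsq_op, mul_sum, mul_left_comm]
    exact sum_comm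
  rw [hval, ← sum_sub_distrib]
  refine sum_congr rfl fun p _ ↦ ?_
  rw [← mul_sub, sqMass, sqMass, ← sum_add_distrib, sum_div, ← sum_sub_distrib]
  congr 1
  exact sum_congr rfl fun j _ ↦ by rw [defect]; ring

lemma sum_pairWeight_mul_sum_defect_le (hN : ∀ v, G.sqMass ρ h v ≤ 1 - γ)
    (hval : 1 - η - γ ≤ G.vectorValue ρ h) :
    ∑ p, G.pairWeight p * ∑ j, ρ j * G.defect (h j) p ≤ η := by
  have : ∑ p, G.pairWeight p * ((G.sqMass ρ h p.1.1 + G.sqMass ρ h p.2.1) / 2) ≤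
      ∑ p, G.pairWeight p * (1 - γ) :=
    sum_le_sum fun p _ ↦ mul_le_mul_of_nonneg_left
      (by linarith [hN p.1.1, hN p.2.1]) (pairWeight_nonneg p)
  rw [← sum_mul, sum_pairWeight, one_mul] at this
  linarith [G.sum_pairWeight_mul_sum_defect (ρ := ρ) (h := h)]

namespace IsVectorAssignment

variable (hh : G.IsVectorAssignment ρ h)

include hh

lemma mass_mem_Icc (j : J) (v : G.Q2) : G.mass (h j) v ∈ Set.Icc (0 : ℝ) 1 :=
  ⟨mass_nonneg (hh.nonneg j) v, hh.mass_le_one j v⟩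

lemma sum_pairWeight_mul_sum_defect_nonneg :
    0 ≤ ∑ p, G.pairWeight p * ∑ j, ρ j * G.defect (h j) p :=
  sum_nonneg fun p _ ↦ mul_nonneg (pairWeight_nonneg p)
    (sum_nonneg fun j _ ↦ mul_nonneg (hh.weight_nonneg j) (defect_nonneg (hh.nonneg j) p))

lemma sum_pairWeight_mul_deficit_le (hval : 1 - η - γ ≤ G.vectorValue ρ h) :
    ∑ p, G.pairWeight p * ((1 - G.sqMass ρ h p.1.1) + (1 - G.sqMass ρ h p.2.1)) ≤
      2 * (γ + η) := by
  have hsum : ∑ p, G.pairWeight p * ((1 - G.sqMass ρ h p.1.1) + (1 - G.sqMass ρ h p.2.1)) =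
      2 * (∑ p, G.pairWeight p -
        ∑ p, G.pairWeight p * ((G.sqMass ρ h p.1.1 + G.sqMass ρ h p.2.1) / 2)) := by
    rw [← sum_sub_distrib, mul_sum]
    exact sum_congr rfl fun p _ ↦ by ring
  rw [hsum, sum_pairWeight]
  linarith [G.sum_pairWeight_mul_sum_defect (ρ := ρ) (h := h),
    hh.sum_pairWeight_mul_sum_defect_nonneg]

lemma sum_sq_mass_sub_mass_le (p : G.Constraint × G.Constraint) :
    ∑ j, ρ j * (G.mass (h j) p.1.1 - G.mass (h j) p.2.1) ^ 2 ≤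
      2 * ∑ j, ρ j * G.defect (h j) p := by
  rw [mul_sum]
  exact sum_le_sum fun j _ ↦ (mul_le_mul_of_nonneg_left
    (sq_mass_sub_mass_le_defect (hh.nonneg j) p) (hh.weight_nonneg j)).trans_eq (mul_left_comm ..)

lemma sum_mass_mul_one_sub_mass_le (v : G.Q2) :
    ∑ j, ρ j * (G.mass (h j) v * (1 - G.mass (h j) v)) ≤ 1 - G.sqMass ρ h v := by
  have : ∑ j, ρ j * (G.mass (h j) v * (1 - G.mass (h j) v)) =
      ∑ j, ρ j * G.mass (h j) v - G.sqMass ρ h v := by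
    rw [sqMass, ← sum_sub_distrib]
    exact sum_congr rfl fun j _ ↦ by ring
  linarith [hh.total_mass_le_one v]

lemma sqMass_le {t : ℝ} (ht₀ : 0 ≤ t) (ht₁ : t ≤ 1) (v : G.Q2) :
    G.sqMass ρ h v ≤ t + (1 - t) * ∑ j with t ≤ G.mass (h j) v, ρ j := by
  have hsq (j : J) : G.mass (h j) v ^ 2 ≤
      t * G.mass (h j) v + (1 - t) * if t ≤ G.mass (h j) v then 1 else 0 := by
    obtain ⟨h₀, h₁⟩ := hh.mass_mem_Icc j v
    split_ifs with ht
    · nlinarith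
    · nlinarith
  calc G.sqMass ρ h v
      ≤ ∑ j, ρ j * (t * G.mass (h j) v + (1 - t) * if t ≤ G.mass (h j) v then 1 else 0) :=
        sum_le_sum fun j _ ↦ mul_le_mul_of_nonneg_left (hsq j) (hh.weight_nonneg j)
    _ = t * ∑ j, ρ j * G.mass (h j) v + (1 - t) * ∑ j with t ≤ G.mass (h j) v, ρ j := by
        rw [sum_filter, mul_sum, mul_sum, ← sum_add_distrib]
        exact sum_congr rfl fun j _ ↦ by split_ifs <;> ring
    _ ≤ t + (1 - t) * ∑ j with t ≤ G.mass (h j) v, ρ j :=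
        add_le_add_left (mul_le_of_le_one_right ht₀ (hh.total_mass_le_one v)) _

lemma half_le_sum_threshold {t : ℝ} (ht : t ∈ Set.Ioc (1 / 2 : ℝ) (3 / 4)) {v : G.Q2}
    (hv : 9 / 10 ≤ G.sqMass ρ h v) : 1 / 2 ≤ ∑ j with t ≤ G.mass (h j) v, ρ j := by
  have hle := hh.sqMass_le (t := t) (by linarith [ht.1]) (by linarith [ht.2]) v
  nlinarith [ht.2]

lemma exists_threshold_le (hN : ∀ v, G.sqMass ρ h v ≤ 1 - γ)
    (hval : 1 - η - γ ≤ G.vectorValue ρ h) :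
    ∃ t ∈ Set.Ioc (1 / 2 : ℝ) (3 / 4), ∑ p, G.pairWeight p *
      ∑ j, ρ j * (Set.uIoc (G.mass (h j) p.1.1) (G.mass (h j) p.2.1)).indicator 1 t ≤
        64 * η + 32 * √(η * (γ + η)) := by
  obtain ⟨t, ht, hle⟩ := exists_threshold_sum_indicator_uIoc_le_of_mem_Icc
    (w := fun k : (G.Constraint × G.Constraint) × J ↦ G.pairWeight k.1 * ρ k.2)
    (fun k ↦ mul_nonneg (pairWeight_nonneg k.1) (hh.weight_nonneg k.2))
    (fun k ↦ hh.mass_mem_Icc k.2 k.1.1.1) (fun k ↦ hh.mass_mem_Icc k.2 k.1.2.1)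
  simp only [Fintype.sum_prod_type (α₁ := G.Constraint × G.Constraint), mul_assoc,
    ← mul_sum] at hle
  refine ⟨t, ht, hle.trans ?_⟩
  have hspread : ∑ p, G.pairWeight p *
      ∑ j, ρ j * (G.mass (h j) p.1.1 - G.mass (h j) p.2.1) ^ 2 ≤ 2 * η :=
    calc _ ≤ ∑ p, G.pairWeight p * (2 * ∑ j, ρ j * G.defect (h j) p) :=
          sum_le_sum fun p _ ↦
            mul_le_mul_of_nonneg_left (hh.sum_sq_mass_sub_mass_le p) (pairWeight_nonneg p)
      _ = 2 * ∑ p, G.pairWeight p * ∑ j, ρ j * G.defect (h j) p := by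
          simp only [mul_sum, mul_left_comm]
      _ ≤ 2 * η := by linarith [sum_pairWeight_mul_sum_defect_le hN hval]
  have hfrac : ∑ p, G.pairWeight p * ∑ j, ρ j *
      (G.mass (h j) p.1.1 * (1 - G.mass (h j) p.1.1) +
        G.mass (h j) p.2.1 * (1 - G.mass (h j) p.2.1)) ≤ 2 * (γ + η) := by
    refine (sum_le_sum fun p _ ↦ mul_le_mul_of_nonneg_left ?_ (pairWeight_nonneg p)).trans
      (hh.sum_pairWeight_mul_deficit_le hval)
    simp only [mul_add, sum_add_distrib]
    exact add_le_add (hh.sum_mass_mul_one_sub_mass_le _) (hh.sum_mass_mul_one_sub_mass_le _)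
  have hη : 0 ≤ η :=
    hh.sum_pairWeight_mul_sum_defect_nonneg.trans (sum_pairWeight_mul_sum_defect_le hN hval)
  have hsqrt : √(2 * η) * √(2 * (γ + η)) = 2 * √(η * (γ + η)) := by
    rw [← Real.sqrt_mul (by positivity), mul_mul_mul_comm, Real.sqrt_mul (by norm_num)]
    norm_num
  linarith [mul_le_mul (Real.sqrt_le_sqrt hspread) (Real.sqrt_le_sqrt hfrac)
    (Real.sqrt_nonneg _) (Real.sqrt_nonneg _)]

end IsVectorAssignment

end VectorAssignment

section Rounding

variable {G : ProjGame} {J : Type*} {h : J → G.Q2 × G.A → ℝ} {t : ℝ}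

/-- The nonnegative function on questions and answers that uses coordinate `σ v` of the vector
assignment `h` at the question `v`. -/
def select (G : ProjGame) (h : J → G.Q2 × G.A → ℝ) (σ : G.Q2 → J) : G.Q2 × G.A → ℝ :=
  fun q ↦ h (σ q.1) q

/-- The cost of a pair of constraints inside cluster `j`: a bound on the disagreement of the
normalised coordinate `h j`, plus `1` if the threshold `t` separates the two masses. -/
noncomputable def roundingCost (G : ProjGame) (h : J → G.Q2 × G.A → ℝ) (t : ℝ) (j : J)
    (p : G.Constraint × G.Constraint) : ℝ :=
  4 * G.defect (h j) p + (Set.uIoc (G.mass (h j) p.1.1) (G.mass (h j) p.2.1)).indicator 1 t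

lemma four_mul_defect_le_roundingCost (j : J) (p : G.Constraint × G.Constraint) :
    4 * G.defect (h j) p ≤ G.roundingCost h t j p :=
  le_add_of_nonneg_right (Set.indicator_nonneg (fun _ _ ↦ zero_le_one) t)

lemma one_le_roundingCost (hh : ∀ j q, 0 ≤ h j q) {j : J} {p : G.Constraint × G.Constraint}
    (hsep : ¬(t ≤ G.mass (h j) p.1.1 ↔ t ≤ G.mass (h j) p.2.1)) :
    1 ≤ G.roundingCost h t j p := by
  have hmem : t ∈ Set.uIoc (G.mass (h j) p.1.1) (G.mass (h j) p.2.1) := by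
    rw [Set.mem_uIoc]
    grind
  rw [roundingCost, Set.indicator_of_mem hmem]
  exact le_add_of_nonneg_left (mul_nonneg (by norm_num) (defect_nonneg (hh j) p))

lemma one_sub_clusterCost_le_agreement (hh : ∀ j q, 0 ≤ h j q) {σ : G.Q2 → J}
    {p : G.Constraint × G.Constraint} (h₁ : 1 / 2 ≤ G.mass (h (σ p.1.1)) p.1.1)
    (h₂ : 1 / 2 ≤ G.mass (h (σ p.2.1)) p.2.1) :
    1 - clusterCost (fun p ↦ p.1.1) (fun p ↦ p.2.1) (G.roundingCost h t) σ p ≤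
      G.agreement (G.normalize (G.select h σ)) p := by
  by_cases hσ : σ p.1.1 = σ p.2.1
  · set j := σ p.2.1 with hj
    have hind₁ (α : G.A) : G.induced (G.select h σ) p.1 α = G.induced (h j) p.1 α := by
      simp only [induced, select, hσ]
    have hagr : G.agreement (G.select h σ) p = G.agreement (h j) p := by
      simp only [agreement, hind₁]
      rfl
    have hm₁ : G.mass (G.select h σ) p.1.1 = G.mass (h j) p.1.1 := by
      simp only [mass, select, hσ]
    have hm₂ : G.mass (G.select h σ) p.2.1 = G.mass (h j) p.2.1 := rfl
    rw [hσ] at h₁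
    rw [agreement_normalize (by linarith) (by linarith), hagr, hm₁, hm₂]
    simp only [clusterCost, hσ, ← hj, if_true]
    linarith [one_sub_defect_le_agreement_div (hh j) h₁ h₂,
      four_mul_defect_le_roundingCost (h := h) (t := t) j p]
  · simp only [clusterCost, hσ, if_false, sub_self]
    exact agreement_nonneg (isBob_normalize fun q ↦ hh _ q).1 p

variable [Fintype J] {ρ : J → ℝ} {γ η : ℝ}

open Classical in
/-- The pairs of constraints at both of whose questions the mass vector is almost a unit vector. -/
noncomputable def heavyPairs (G : ProjGame) (ρ : J → ℝ) (h : J → G.Q2 × G.A → ℝ) :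
    Finset (G.Constraint × G.Constraint) :=
  {p | 9 / 10 ≤ G.sqMass ρ h p.1.1 ∧ 9 / 10 ≤ G.sqMass ρ h p.2.1}

namespace IsVectorAssignment

variable (hh : G.IsVectorAssignment ρ h)

include hh

lemma one_sub_le_sum_heavyPairs (hγ : γ ≤ 1 / 100) (hN : ∀ v, G.sqMass ρ h v ≤ 1 - γ)
    (hval : 1 - η - γ ≤ G.vectorValue ρ h) :
    1 - 23 * η ≤ ∑ p ∈ G.heavyPairs ρ h, G.pairWeight p := by
  have hpt (p : G.Constraint × G.Constraint) : G.pairWeight p ≤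
      (if 9 / 10 ≤ G.sqMass ρ h p.1.1 ∧ 9 / 10 ≤ G.sqMass ρ h p.2.1 then G.pairWeight p else 0) +
        23 / 2 * (G.pairWeight p * ((1 - G.sqMass ρ h p.1.1) + (1 - G.sqMass ρ h p.2.1)) -
          2 * γ * G.pairWeight p) := by
    have hW := G.pairWeight_nonneg p
    have h₁ := hN p.1.1
    have h₂ := hN p.2.1
    split_ifs with hp
    · nlinarith
    · rw [not_and_or, not_le, not_le] at hp
      have : 1 ≤ 23 / 2 * ((1 - G.sqMass ρ h p.1.1) + (1 - G.sqMass ρ h p.2.1) - 2 * γ) := by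
        rcases hp with hp | hp <;> linarith
      nlinarith
  have hsum := sum_le_sum fun p (_ : p ∈ univ) ↦ hpt p
  rw [sum_add_distrib, ← mul_sum, sum_sub_distrib, ← mul_sum, sum_pairWeight, ← sum_filter] at hsum
  rw [heavyPairs]
  linarith [hh.sum_pairWeight_mul_deficit_le hval]

lemma exists_threshold_sum_roundingCost_le (hN : ∀ v, G.sqMass ρ h v ≤ 1 - γ)
    (hval : 1 - η - γ ≤ G.vectorValue ρ h) :
    ∃ t ∈ Set.Ioc (1 / 2 : ℝ) (3 / 4), ∑ p, G.pairWeight p * ∑ j, ρ j * G.roundingCost h t j p ≤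
      68 * η + 32 * √(η * (γ + η)) := by
  obtain ⟨t, ht, hle⟩ := hh.exists_threshold_le hN hval
  refine ⟨t, ht, ?_⟩
  have hsplit : ∑ p, G.pairWeight p * ∑ j, ρ j * G.roundingCost h t j p =
      4 * ∑ p, G.pairWeight p * ∑ j, ρ j * G.defect (h j) p + ∑ p, G.pairWeight p *
        ∑ j, ρ j * (Set.uIoc (G.mass (h j) p.1.1) (G.mass (h j) p.2.1)).indicator 1 t := by
    simp only [roundingCost, mul_add, sum_add_distrib, mul_sum, mul_left_comm (4 : ℝ)]
  linarith [sum_pairWeight_mul_sum_defect_le hN hval]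

lemma exists_selection_sum_clusterCost_le [Nonempty J] (hN : ∀ v, G.sqMass ρ h v ≤ 1 - γ)
    (hval : 1 - η - γ ≤ G.vectorValue ρ h) :
    ∃ (t : ℝ) (σ : G.Q2 → J),
      (∀ v, 9 / 10 ≤ G.sqMass ρ h v → 1 / 2 ≤ G.mass (h (σ v)) v) ∧
      ∑ p ∈ G.heavyPairs ρ h, G.pairWeight p *
        clusterCost (fun p ↦ p.1.1) (fun p ↦ p.2.1) (G.roundingCost h t) σ p ≤
          136 * η + 64 * √(η * (γ + η)) := by
  classical
  obtain ⟨t, ht, hle⟩ := hh.exists_threshold_sum_roundingCost_le hN hval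
  have hcost (j : J) (p : G.Constraint × G.Constraint) : 0 ≤ G.roundingCost h t j p :=
    (mul_nonneg (by norm_num) (defect_nonneg (hh.nonneg j) p)).trans
      (four_mul_defect_le_roundingCost j p)
  obtain ⟨σ, hσ, hcut⟩ := exists_clustering_sum_clusterCost_le
    (S := {v | 9 / 10 ≤ G.sqMass ρ h v}) (E := G.heavyPairs ρ h)
    (B := fun j ↦ {v | t ≤ G.mass (h j) v}) G.pairWeight_nonneg hh.weight_nonneg hcost
    (fun j p ↦ one_le_roundingCost hh.nonneg) one_half_pos
    (fun v hv ↦ hh.half_le_sum_threshold ht (mem_filter.1 hv).2)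
    (fun p hp ↦ by simpa [heavyPairs] using hp)
  refine ⟨t, σ, fun v hv ↦ ht.1.le.trans (hσ v (by simpa using hv)), ?_⟩
  have hheavy : ∑ p ∈ G.heavyPairs ρ h, G.pairWeight p * ∑ j, ρ j * G.roundingCost h t j p ≤
      ∑ p, G.pairWeight p * ∑ j, ρ j * G.roundingCost h t j p :=
    sum_le_univ_sum_of_nonneg fun p ↦ mul_nonneg (pairWeight_nonneg p)
      (sum_nonneg fun j _ ↦ mul_nonneg (hh.weight_nonneg j) (hcost j p))
  linarith

theorem exists_isBob_le_normUsq_op [Nonempty J] (hγ : γ ≤ 1 / 100)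
    (hN : ∀ v, G.sqMass ρ h v ≤ 1 - γ) (hval : 1 - η - γ ≤ G.vectorValue ρ h) :
    ∃ f, G.IsBob f ∧ 1 - 223 * (η + √(γ * η)) ≤ G.normUsq (G.op f) := by
  obtain ⟨t, σ, hσ, hcost⟩ := hh.exists_selection_sum_clusterCost_le hN hval
  have hselect (q : G.Q2 × G.A) : 0 ≤ G.select h σ q := hh.nonneg _ q
  refine ⟨_, isBob_normalize hselect, ?_⟩
  have hagree : ∑ p ∈ G.heavyPairs ρ h, G.pairWeight p -
      ∑ p ∈ G.heavyPairs ρ h, G.pairWeight p *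
        clusterCost (fun p ↦ p.1.1) (fun p ↦ p.2.1) (G.roundingCost h t) σ p ≤
      G.normUsq (G.op (G.normalize (G.select h σ))) := by
    rw [normUsq_op, ← sum_sub_distrib]
    refine (sum_le_sum fun p hp ↦ ?_).trans (sum_le_univ_sum_of_nonneg fun p ↦
      mul_nonneg (pairWeight_nonneg p) (agreement_nonneg (isBob_normalize hselect).1 p))
    obtain ⟨h₁, h₂⟩ := (mem_filter.1 hp).2
    rw [← mul_one_sub]
    exact mul_le_mul_of_nonneg_left
      (one_sub_clusterCost_le_agreement hh.nonneg (hσ _ h₁) (hσ _ h₂)) (pairWeight_nonneg p)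
  have hη : 0 ≤ η :=
    hh.sum_pairWeight_mul_sum_defect_nonneg.trans (sum_pairWeight_mul_sum_defect_le hN hval)
  have hsqrt : √(η * (γ + η)) ≤ η + √(γ * η) := by
    refine Real.sqrt_le_iff.2 ⟨by positivity, ?_⟩
    nlinarith [Real.sqrt_nonneg (γ * η), Real.sq_sqrt' (x := γ * η), le_max_left (γ * η) 0]
  linarith [hh.one_sub_le_sum_heavyPairs hγ hN hval, Real.sqrt_nonneg (γ * η)]

end IsVectorAssignment

end Rounding

section Tensor

variable {G H : ProjGame}

lemma tensorC_eq_some_iff {A A' : Type} (π : A → Option A) (π' : A' → Option A')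
    (β α : A × A') : tensorC π π' β = some α ↔ π β.1 = some α.1 ∧ π' β.2 = some α.2 := by
  simp [tensorC, Option.bind_eq_some_iff, Prod.ext_iff]

lemma sum_tensor_μ_mul (u : G.Q1) (u' : H.Q1)
    (φ : (G.Q2 × H.Q2) × (G.A × H.A → Option (G.A × H.A)) → ℝ) :
    ∑ e : (G.Q2 × H.Q2) × (G.A × H.A → Option (G.A × H.A)), (G.tensor H).μ ((u, u'), e) * φ e =
      ∑ e : G.Constraint, ∑ e' : H.Constraint,
        G.μ (u, e) * H.μ (u', e') * φ ((e.1, e'.1), tensorC e.2 e'.2) := by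
  simp only [tensor, sum_mul, Prod.mk.injEq]
  rw [sum_comm]
  simp only [ite_and, ite_mul, zero_mul, sum_ite_irrel, sum_ite_eq, sum_ite_eq', mem_univ, if_true,
    sum_const_zero, Fintype.sum_prod_type]

lemma wU_tensor (u : G.Q1) (u' : H.Q1) : (G.tensor H).wU (u, u') = G.wU u * H.wU u' := by
  have h := sum_tensor_μ_mul u u' fun _ ↦ 1
  simp only [mul_one, ← sum_mul_sum, ← wU_eq_sum] at h
  exact (wU_eq_sum (G := G.tensor H) (u, u')).trans h

lemma sum_tensor_condProb_mul (u : G.Q1) (u' : H.Q1)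
    (φ : (G.Q2 × H.Q2) × (G.A × H.A → Option (G.A × H.A)) → ℝ) :
    ∑ e : (G.Q2 × H.Q2) × (G.A × H.A → Option (G.A × H.A)),
      (G.tensor H).condProb (u, u') e * φ e = ∑ e : G.Constraint, ∑ e' : H.Constraint,
        G.condProb u e * H.condProb u' e' * φ ((e.1, e'.1), tensorC e.2 e'.2) := by
  have hdiv : ∑ e : (G.Q2 × H.Q2) × (G.A × H.A → Option (G.A × H.A)),
      (G.tensor H).condProb (u, u') e * φ e =
        (∑ e : (G.Q2 × H.Q2) × (G.A × H.A → Option (G.A × H.A)),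
          (G.tensor H).μ ((u, u'), e) * φ e) / (G.wU u * H.wU u') := by
    simp only [condProb, wU_tensor, div_mul_eq_mul_div, ← sum_div]
  rw [hdiv, sum_tensor_μ_mul]
  simp only [sum_div]
  refine sum_congr rfl fun e _ ↦ sum_congr rfl fun e' _ ↦ ?_
  rw [condProb, condProb, div_mul_div_comm, div_mul_eq_mul_div]

lemma induced_tensor (F : (G.Q2 × H.Q2) × (G.A × H.A) → ℝ) (e : G.Constraint) (e' : H.Constraint)
    (α : G.A) (α' : H.A) :
    (G.tensor H).induced F ((e.1, e'.1), tensorC e.2 e'.2) (α, α') =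
      G.induced (fun q ↦ H.induced (fun q' ↦ F ((q.1, q'.1), (q.2, q'.2))) e' α') e α := by
  change (∑ b : G.A × H.A, if tensorC e.2 e'.2 b = some (α, α') then F ((e.1, e'.1), b) else 0) = _
  simp only [induced, tensorC_eq_some_iff, ite_and, Fintype.sum_prod_type, sum_ite_irrel,
    sum_const_zero]

lemma op_tensor (F : (G.Q2 × H.Q2) × (G.A × H.A) → ℝ) (u : G.Q1) (u' : H.Q1)
    (α : G.A) (α' : H.A) :
    (G.tensor H).op F ((u, u'), (α, α')) =
      G.op (fun q ↦ H.op (fun q' ↦ F ((q.1, q'.1), (q.2, q'.2))) (u', α')) (u, α) :=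
  calc (G.tensor H).op F ((u, u'), (α, α'))
      = ∑ e : G.Constraint, ∑ e' : H.Constraint, G.condProb u e * H.condProb u' e' *
          (G.tensor H).induced F ((e.1, e'.1), tensorC e.2 e'.2) (α, α') :=
        (op_apply (G := G.tensor H) (u, u') (α, α')).trans (sum_tensor_condProb_mul u u' _)
    _ = ∑ e, ∑ e', G.condProb u e * H.condProb u' e' *
          G.induced (fun q ↦ H.induced (fun q' ↦ F ((q.1, q'.1), (q.2, q'.2))) e' α') e α :=
        sum_congr rfl fun e _ ↦ sum_congr rfl fun e' _ ↦
          congrArg _ (induced_tensor F e e' α α')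
    _ = _ := by simp only [op_apply, induced_sum, induced_const_mul, mul_sum, mul_assoc]

/-- The vector assignment for `G` induced by `F`, with coordinates indexed by Alice's questions and
answers in `H`: the operator of `H` applied to the second components of `F`. -/
noncomputable def opSnd (G H : ProjGame) (F : (G.Q2 × H.Q2) × (G.A × H.A) → ℝ) (j : H.Q1 × H.A) :
    G.Q2 × G.A → ℝ :=
  fun q ↦ H.op (fun r ↦ F ((q.1, r.1), (q.2, r.2))) j

/-- The assignment for Bob in `H` that fixes his question `v` in `G` and discards his answer. -/
def marginalSnd (G H : ProjGame) (F : (G.Q2 × H.Q2) × (G.A × H.A) → ℝ) (v : G.Q2) :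
    H.Q2 × H.A → ℝ :=
  fun r ↦ ∑ β, F ((v, r.1), (β, r.2))

variable {F : (G.Q2 × H.Q2) × (G.A × H.A) → ℝ}

lemma mass_opSnd (j : H.Q1 × H.A) (v : G.Q2) :
    G.mass (G.opSnd H F j) v = H.op (G.marginalSnd H F v) j :=
  (op_sum _ j).symm

lemma sqMass_opSnd (v : G.Q2) :
    G.sqMass (fun j ↦ H.wU j.1) (G.opSnd H F) v = H.normUsq (H.op (G.marginalSnd H F v)) := by
  simp only [sqMass, mass_opSnd, normUsq, Fintype.sum_prod_type, mul_sum]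

lemma vectorValue_opSnd :
    G.vectorValue (fun j ↦ H.wU j.1) (G.opSnd H F) =
      (G.tensor H).normUsq ((G.tensor H).op F) := by
  change _ = ∑ u : G.Q1 × H.Q1, (G.tensor H).wU u *
    ∑ α : G.A × H.A, (G.tensor H).op F (u, α) ^ 2
  simp only [vectorValue, normUsq, Fintype.sum_prod_type, wU_tensor, op_tensor, mul_sum]
  calc ∑ u', ∑ α', ∑ u, ∑ α, H.wU u' * (G.wU u * G.op (G.opSnd H F (u', α')) (u, α) ^ 2)
      = ∑ u', ∑ u, ∑ α', ∑ α, H.wU u' * (G.wU u * G.op (G.opSnd H F (u', α')) (u, α) ^ 2) :=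
        sum_congr rfl fun u' _ ↦ sum_comm
    _ = ∑ u, ∑ u', ∑ α', ∑ α, H.wU u' * (G.wU u * G.op (G.opSnd H F (u', α')) (u, α) ^ 2) :=
        sum_comm
    _ = ∑ u, ∑ u', ∑ α, ∑ α', G.wU u * H.wU u' * G.op (G.opSnd H F (u', α')) (u, α) ^ 2 := by
        refine sum_congr rfl fun u _ ↦ sum_congr rfl fun u' _ ↦ sum_comm.trans ?_
        exact sum_congr rfl fun α _ ↦ sum_congr rfl fun α' _ ↦ by ring

lemma isBob_marginalSnd (hF : (G.tensor H).IsBob F) (v : G.Q2) :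
    H.IsBob (G.marginalSnd H F v) := by
  refine ⟨fun q ↦ sum_nonneg fun β _ ↦ hF.1 _, fun v' ↦ ?_⟩
  rw [← hF.2 (v, v')]
  exact sum_comm.trans (Fintype.sum_prod_type fun b : G.A × H.A ↦ F ((v, v'), b)).symm

lemma isVectorAssignment_opSnd (hF : (G.tensor H).IsBob F) :
    G.IsVectorAssignment (fun j ↦ H.wU j.1) (G.opSnd H F) where
  weight_nonneg j := wU_nonneg j.1
  nonneg j q := op_nonneg (fun _ ↦ hF.1 _) j
  mass_le_one j v := mass_opSnd (F := F) j v ▸ op_le_one (isBob_marginalSnd hF v) j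
  total_mass_le_one v := by
    simp only [mass_opSnd, Fintype.sum_prod_type, ← mul_sum]
    calc ∑ u, H.wU u * ∑ α, H.op (G.marginalSnd H F v) (u, α)
        ≤ ∑ u, H.wU u := sum_le_sum fun u _ ↦
          mul_le_of_le_one_right (wU_nonneg u) (sum_op_le_one (isBob_marginalSnd hF v) u)
      _ = 1 := sum_wU

end Tensor

end ProjGame

/-- **Few repetitions, two games.** There is a universal `C > 0` such that: if
`‖H‖² ≤ 1 - γ` (`0 < γ ≤ 1/100`) and `‖G ⊗ H‖² ≥ 1 - η - γ` (`η ≥ 0`), then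
`‖G‖² ≥ 1 - C(η + √(γη))`. -/
theorem two_games_bound :
    ∃ C : ℝ, 0 < C ∧
      ∀ (G H : ProjGame) (γ η : ℝ), 0 < γ → γ ≤ 1 / 100 → 0 ≤ η →
        H.collVal ^ 2 ≤ 1 - γ → 1 - η - γ ≤ (G.tensor H).collVal ^ 2 →
          1 - C * (η + Real.sqrt (γ * η)) ≤ G.collVal ^ 2 := by
  refine ⟨223, by norm_num, fun G H γ η _ hγ _ hH hGH ↦ ?_⟩
  obtain ⟨F, hF, hFval⟩ := (G.tensor H).isGreatest_collVal_sq.1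
  have hmass (v : G.Q2) : G.sqMass (fun j ↦ H.wU j.1) (G.opSnd H F) v ≤ 1 - γ :=
    (ProjGame.sqMass_opSnd v).trans_le
      ((H.isGreatest_collVal_sq.2 ⟨_, ProjGame.isBob_marginalSnd hF v, rfl⟩).trans hH)
  have hval : 1 - η - γ ≤ G.vectorValue (fun j ↦ H.wU j.1) (G.opSnd H F) :=
    (hGH.trans_eq hFval.symm).trans_eq ProjGame.vectorValue_opSnd.symm
  obtain ⟨f, hf, hle⟩ :=
    (ProjGame.isVectorAssignment_opSnd hF).exists_isBob_le_normUsq_op hγ hmass hval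
  exact hle.trans (G.isGreatest_collVal_sq.2 ⟨f, hf, rfl⟩)
end

section
/- Let A and B be jointly-distributed nonnegative integrable random variables and let ρ ∈ [0,1]. If E[√(A·B)] = ρ·E[(A+B)/2], then E[min(A,B)] ≥ (1 − √(1−ρ²))·E[(A+B)/2]. -/
open MeasureTheory

/-!
Write `a = |A - B| / 2` and `g = √(A * B)`. Then `min A B = (A + B) / 2 - a`, and pointwise
`a ^ 2 + g ^ 2 = ((A + B) / 2) ^ 2`, so `(A + B) / 2` is the modulus of `a + g * I`. Since the
modulus of an integral is at most the integral of the modulus,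
`(∫ a) ^ 2 + (∫ g) ^ 2 ≤ (∫ (A + B) / 2) ^ 2`: a lower bound on `∫ g` is an upper bound on `∫ a`,
that is, a lower bound on `∫ min A B`.
-/

theorem min_eq_add_div_two_sub_abs_sub_div_two {K : Type*} [Field K] [LinearOrder K]
    [IsStrictOrderedRing K] (a b : K) :
    min a b = (a + b) / 2 - |a - b| / 2 := by
  linarith [min_add_max a b, max_sub_min_eq_abs' a b]

theorem sqrt_abs_sub_div_two_sq_add_sqrt_mul_sq {a b : ℝ} (ha : 0 ≤ a) (hb : 0 ≤ b) :
    √((|a - b| / 2) ^ 2 + √(a * b) ^ 2) = (a + b) / 2 := by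
  have sq_identity : (|a - b| / 2) ^ 2 + √(a * b) ^ 2 = ((a + b) / 2) ^ 2 := by
    rw [div_pow, sq_abs, Real.sq_sqrt (mul_nonneg ha hb)]
    ring
  rw [sq_identity, Real.sqrt_sq (by positivity)]

theorem sqrt_mul_le_abs_add_abs (a b : ℝ) : √(a * b) ≤ |a| + |b| := by
  refine Real.sqrt_le_iff.mpr ⟨by positivity, ?_⟩
  calc a * b ≤ |a| * |b| := (le_abs_self _).trans_eq (abs_mul a b)
    _ ≤ (|a| + |b|) ^ 2 := by nlinarith [abs_nonneg a, abs_nonneg b]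

section Integral

variable {Ω : Type*} [MeasurableSpace Ω] {μ : Measure Ω} {f g : Ω → ℝ}

theorem integrable_sqrt_mul (hf : Integrable f μ) (hg : Integrable g μ) :
    Integrable (fun ω => √(f ω * g ω)) μ := by
  refine (hf.abs.add hg.abs).mono' ?_ (.of_forall fun ω => ?_)
  · exact Real.continuous_sqrt.comp_aestronglyMeasurable
      (hf.aestronglyMeasurable.mul hg.aestronglyMeasurable)
  · rw [Real.norm_of_nonneg (Real.sqrt_nonneg _)]
    exact sqrt_mul_le_abs_add_abs (f ω) (g ω)

theorem sqrt_integral_sq_add_integral_sq_le (hf : Integrable f μ) (hg : Integrable g μ) :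
    √((∫ ω, f ω ∂μ) ^ 2 + (∫ ω, g ω ∂μ) ^ 2) ≤ ∫ ω, √(f ω ^ 2 + g ω ^ 2) ∂μ := by
  have integral_complex :
      ∫ ω, ((f ω : ℂ) + g ω * Complex.I) ∂μ
        = (∫ ω, f ω ∂μ : ℝ) + (∫ ω, g ω ∂μ : ℝ) * Complex.I := by
    rw [integral_add hf.ofReal (hg.ofReal.mul_const _), integral_mul_const, integral_complex_ofReal,
      integral_complex_ofReal]
  calc √((∫ ω, f ω ∂μ) ^ 2 + (∫ ω, g ω ∂μ) ^ 2)
      = ‖∫ ω, ((f ω : ℂ) + g ω * Complex.I) ∂μ‖ := by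
        rw [integral_complex, Complex.norm_add_mul_I]
    _ ≤ ∫ ω, ‖(f ω : ℂ) + g ω * Complex.I‖ ∂μ := norm_integral_le_integral_norm _
    _ = ∫ ω, √(f ω ^ 2 + g ω ^ 2) ∂μ := by simp only [Complex.norm_add_mul_I]

theorem integral_min_eq_integral_add_div_two_sub (hf : Integrable f μ) (hg : Integrable g μ) :
    ∫ ω, min (f ω) (g ω) ∂μ = ∫ ω, (f ω + g ω) / 2 ∂μ - ∫ ω, |f ω - g ω| / 2 ∂μ := by
  simp only [min_eq_add_div_two_sub_abs_sub_div_two]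
  exact integral_sub ((hf.add hg).div_const 2) ((hf.sub hg).abs.div_const 2)

theorem integral_abs_sub_div_two_sq_add_integral_sqrt_mul_sq_le (hf0 : 0 ≤ᵐ[μ] f) (hg0 : 0 ≤ᵐ[μ] g)
    (hf : Integrable f μ) (hg : Integrable g μ) :
    (∫ ω, |f ω - g ω| / 2 ∂μ) ^ 2 + (∫ ω, √(f ω * g ω) ∂μ) ^ 2
      ≤ (∫ ω, (f ω + g ω) / 2 ∂μ) ^ 2 := by
  have integral_modulus :
      ∫ ω, √((|f ω - g ω| / 2) ^ 2 + √(f ω * g ω) ^ 2) ∂μ = ∫ ω, (f ω + g ω) / 2 ∂μ := by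
    refine integral_congr_ae ?_
    filter_upwards [hf0, hg0] with ω hfω hgω
    exact sqrt_abs_sub_div_two_sq_add_sqrt_mul_sq hfω hgω
  rw [← integral_modulus]
  exact (Real.sqrt_le_iff.mp (sqrt_integral_sq_add_integral_sq_le
    ((hf.sub hg).abs.div_const 2) (integrable_sqrt_mul hf hg))).2

theorem gm_vs_min_general (hf0 : 0 ≤ᵐ[μ] f) (hg0 : 0 ≤ᵐ[μ] g)
    (hf : Integrable f μ) (hg : Integrable g μ) {ρ : ℝ} (hρ : 0 ≤ ρ)
    (h : ρ * ∫ ω, (f ω + g ω) / 2 ∂μ ≤ ∫ ω, √(f ω * g ω) ∂μ) :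
    (1 - √(1 - ρ ^ 2)) * ∫ ω, (f ω + g ω) / 2 ∂μ ≤ ∫ ω, min (f ω) (g ω) ∂μ := by
  have mean_nonneg : 0 ≤ ∫ ω, (f ω + g ω) / 2 ∂μ := by
    refine integral_nonneg_of_ae ?_
    filter_upwards [hf0, hg0] with ω hfω hgω
    exact div_nonneg (add_nonneg hfω hgω) zero_le_two
  have sq_add_sq_le := integral_abs_sub_div_two_sq_add_integral_sqrt_mul_sq_le hf0 hg0 hf hg
  rw [integral_min_eq_integral_add_div_two_sub hf hg]
  set mean := ∫ ω, (f ω + g ω) / 2 ∂μ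
  set halfDiff := ∫ ω, |f ω - g ω| / 2 ∂μ
  have halfDiff_le : halfDiff ≤ √(1 - ρ ^ 2) * mean := calc
    halfDiff ≤ √((1 - ρ ^ 2) * mean ^ 2) := by
      refine Real.le_sqrt_of_sq_le ?_
      linarith [pow_le_pow_left₀ (mul_nonneg hρ mean_nonneg) h 2, mul_pow ρ mean 2]
    _ = √(1 - ρ ^ 2) * mean := by
      rw [Real.sqrt_mul' _ (sq_nonneg mean), Real.sqrt_sq mean_nonneg]
  linarith

end Integral

/-- If `E[√(A·B)] = ρ·E[(A+B)/2]` for jointly-distributed nonnegative integrable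
random variables `A`, `B` and `ρ ∈ [0,1]`, then
`E[min(A,B)] ≥ (1 - √(1-ρ²))·E[(A+B)/2]`. -/
theorem gm_vs_min {Ω : Type*} [MeasurableSpace Ω] (P : Measure Ω) [IsProbabilityMeasure P]
    (A B : Ω → ℝ) (hA : ∀ ω, 0 ≤ A ω) (hB : ∀ ω, 0 ≤ B ω)
    (hAint : Integrable A P) (hBint : Integrable B P)
    (ρ : ℝ) (hρ0 : 0 ≤ ρ) (hρ1 : ρ ≤ 1)
    (h : ∫ ω, Real.sqrt (A ω * B ω) ∂P = ρ * ∫ ω, (A ω + B ω) / 2 ∂P) :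
    (1 - Real.sqrt (1 - ρ ^ 2)) * ∫ ω, (A ω + B ω) / 2 ∂P
      ≤ ∫ ω, min (A ω) (B ω) ∂P :=
  gm_vs_min_general (.of_forall hA) (.of_forall hB) hAint hBint hρ0 h.ge
end

section
/- Let A and B be jointly-distributed nonnegative integrable random variables, let Z be a {0,1}-valued random variable on the same probability space, and let ρ ∈ [0,1]. If E[Z·√(A·B)] ≥ ρ·E[(A+B)/2], then E[Z·min(A,B)] ≥ (1 − √(1−ρ²))·E[(A+B)/2]. -/
open MeasureTheory

/-!
Since `A B = min(A, B) max(A, B)`, the Cauchy–Schwarz inequality gives `E[Z √(A B)]² ≤ x y`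
with `x = E[Z min(A, B)]` and `y = E[Z max(A, B)]`. Put `M = E[(A + B) / 2]`. As
`min(A, B) + max(A, B) = A + B` and `Z ≤ 1`, also `x + y ≤ 2 M`. Therefore
`(ρ M)² ≤ x (2 M - x)`, that is `(M - x)² ≤ (1 - ρ²) M²`.
-/

theorem one_sub_sqrt_mul_le_of_mul_le_sqrt_mul {ρ m x y : ℝ} (hρ : 0 ≤ ρ) (hx : 0 ≤ x)
    (hy : 0 ≤ y) (hxy : x + y ≤ 2 * m) (h : ρ * m ≤ √(x * y)) :
    (1 - √(1 - ρ ^ 2)) * m ≤ x := by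
  have hm : 0 ≤ m := by linarith
  have hsq : (m - x) ^ 2 ≤ (1 - ρ ^ 2) * m ^ 2 := by
    have hprod : (ρ * m) ^ 2 ≤ x * y :=
      (Real.le_sqrt (mul_nonneg hρ hm) (mul_nonneg hx hy)).mp h
    have hy_le : x * y ≤ x * (2 * m - x) := by gcongr; linarith
    linarith
  have hsub : m - x ≤ √(1 - ρ ^ 2) * m :=
    calc m - x ≤ √((1 - ρ ^ 2) * m ^ 2) := Real.le_sqrt_of_sq_le hsq
      _ = √(1 - ρ ^ 2) * m := by rw [Real.sqrt_mul' _ (sq_nonneg m), Real.sqrt_sq hm]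
  linarith

section Integral

variable {Ω : Type*} [MeasurableSpace Ω] {μ : Measure Ω} {f g w : Ω → ℝ}

theorem memLp_two_sqrt (hf : Integrable f μ) : MemLp (fun ω => √(f ω)) 2 μ := by
  have hmeas : AEStronglyMeasurable (fun ω => √(f ω)) μ :=
    Real.continuous_sqrt.comp_aestronglyMeasurable hf.aestronglyMeasurable
  rw [memLp_two_iff_integrable_sq hmeas]
  simpa only [Real.sq_sqrt'] using hf.pos_part

theorem integral_sqrt_mul_le (hf : Integrable f μ) (hg : Integrable g μ) (hf0 : 0 ≤ᵐ[μ] f)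
    (hg0 : 0 ≤ᵐ[μ] g) :
    ∫ ω, √(f ω * g ω) ∂μ ≤ √((∫ ω, f ω ∂μ) * ∫ ω, g ω ∂μ) := by
  have sqrt_rpow_two : ∀ {u : Ω → ℝ}, 0 ≤ᵐ[μ] u → ∫ ω, √(u ω) ^ (2 : ℝ) ∂μ = ∫ ω, u ω ∂μ :=
    fun hu => integral_congr_ae <| by
      filter_upwards [hu] with ω hω
      rw [Real.rpow_two, Real.sq_sqrt hω]
  calc ∫ ω, √(f ω * g ω) ∂μ
      = ∫ ω, √(f ω) * √(g ω) ∂μ := integral_congr_ae <| by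
        filter_upwards [hf0] with ω hω using Real.sqrt_mul hω _
    _ ≤ (∫ ω, √(f ω) ^ (2 : ℝ) ∂μ) ^ (1 / 2 : ℝ) * (∫ ω, √(g ω) ^ (2 : ℝ) ∂μ) ^ (1 / 2 : ℝ) :=
        integral_mul_le_Lp_mul_Lq_of_nonneg Real.HolderConjugate.two_two
          (.of_forall fun _ => Real.sqrt_nonneg _) (.of_forall fun _ => Real.sqrt_nonneg _)
          (by simpa using memLp_two_sqrt hf) (by simpa using memLp_two_sqrt hg)
    _ = √((∫ ω, f ω ∂μ) * ∫ ω, g ω ∂μ) := by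
        rw [sqrt_rpow_two hf0, sqrt_rpow_two hg0, ← Real.sqrt_eq_rpow, ← Real.sqrt_eq_rpow,
          Real.sqrt_mul (integral_nonneg_of_ae hf0)]

theorem integral_mul_sqrt_mul_le (hf : Integrable (fun ω => w ω * f ω) μ)
    (hg : Integrable (fun ω => w ω * g ω) μ) (hw0 : 0 ≤ᵐ[μ] w) (hf0 : 0 ≤ᵐ[μ] f)
    (hg0 : 0 ≤ᵐ[μ] g) :
    ∫ ω, w ω * √(f ω * g ω) ∂μ ≤ √((∫ ω, w ω * f ω ∂μ) * ∫ ω, w ω * g ω ∂μ) := by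
  calc ∫ ω, w ω * √(f ω * g ω) ∂μ
      = ∫ ω, √((w ω * f ω) * (w ω * g ω)) ∂μ := integral_congr_ae <| by
        filter_upwards [hw0] with ω hω
        rw [mul_mul_mul_comm, Real.sqrt_mul (mul_self_nonneg _), Real.sqrt_mul_self hω]
    _ ≤ √((∫ ω, w ω * f ω ∂μ) * ∫ ω, w ω * g ω ∂μ) := by
        refine integral_sqrt_mul_le hf hg ?_ ?_
        · filter_upwards [hw0, hf0] with ω using mul_nonneg
        · filter_upwards [hw0, hg0] with ω using mul_nonneg

theorem integrable_mul_of_mem_Icc (hf : Integrable f μ) (hw : AEStronglyMeasurable w μ)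
    (hw01 : ∀ᵐ ω ∂μ, w ω ∈ Set.Icc 0 1) : Integrable (fun ω => w ω * f ω) μ :=
  hf.bdd_mul (c := 1) hw <| hw01.mono fun _ hω => by
    rw [Real.norm_of_nonneg hω.1]
    exact hω.2

theorem integral_mul_min_add_integral_mul_max_le (hf : Integrable f μ) (hg : Integrable g μ)
    (hf0 : 0 ≤ᵐ[μ] f) (hg0 : 0 ≤ᵐ[μ] g) (hw : AEStronglyMeasurable w μ)
    (hw01 : ∀ᵐ ω ∂μ, w ω ∈ Set.Icc 0 1) :
    ∫ ω, w ω * min (f ω) (g ω) ∂μ + ∫ ω, w ω * max (f ω) (g ω) ∂μ ≤ ∫ ω, f ω + g ω ∂μ := by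
  have hmin : Integrable (fun ω => w ω * min (f ω) (g ω)) μ :=
    integrable_mul_of_mem_Icc (hf.inf hg) hw hw01
  have hmax : Integrable (fun ω => w ω * max (f ω) (g ω)) μ :=
    integrable_mul_of_mem_Icc (hf.sup hg) hw hw01
  rw [← integral_add hmin hmax]
  refine integral_mono_ae (hmin.add hmax) (hf.add hg) ?_
  filter_upwards [hf0, hg0, hw01] with ω hfω hgω hwω
  calc w ω * min (f ω) (g ω) + w ω * max (f ω) (g ω)
      = w ω * (f ω + g ω) := by rw [← mul_add, min_add_max]
    _ ≤ f ω + g ω := mul_le_of_le_one_left (add_nonneg hfω hgω) hwω.2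

end Integral

theorem gm_vs_min_indicator_general {Ω : Type*} [MeasurableSpace Ω] {μ : Measure Ω}
    {A B Z : Ω → ℝ} (hA : 0 ≤ᵐ[μ] A) (hB : 0 ≤ᵐ[μ] B) (hZ : ∀ᵐ ω ∂μ, Z ω ∈ Set.Icc 0 1)
    (hZmeas : AEStronglyMeasurable Z μ) (hAint : Integrable A μ) (hBint : Integrable B μ)
    {ρ : ℝ} (hρ : 0 ≤ ρ)
    (h : ρ * ∫ ω, (A ω + B ω) / 2 ∂μ ≤ ∫ ω, Z ω * √(A ω * B ω) ∂μ) :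
    (1 - √(1 - ρ ^ 2)) * ∫ ω, (A ω + B ω) / 2 ∂μ ≤ ∫ ω, Z ω * min (A ω) (B ω) ∂μ := by
  have hZ0 : 0 ≤ᵐ[μ] Z := hZ.mono fun _ hω => hω.1
  have hmin0 : 0 ≤ᵐ[μ] fun ω => min (A ω) (B ω) := by
    filter_upwards [hA, hB] with ω using le_min
  have hmax0 : 0 ≤ᵐ[μ] fun ω => max (A ω) (B ω) := hA.mono fun _ => le_max_of_le_left
  have cauchy_schwarz : ∫ ω, Z ω * √(A ω * B ω) ∂μ ≤
      √((∫ ω, Z ω * min (A ω) (B ω) ∂μ) * ∫ ω, Z ω * max (A ω) (B ω) ∂μ) := by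
    simpa only [min_mul_max] using integral_mul_sqrt_mul_le
      (f := fun ω => min (A ω) (B ω)) (g := fun ω => max (A ω) (B ω))
      (integrable_mul_of_mem_Icc (hAint.inf hBint) hZmeas hZ)
      (integrable_mul_of_mem_Icc (hAint.sup hBint) hZmeas hZ) hZ0 hmin0 hmax0
  refine one_sub_sqrt_mul_le_of_mul_le_sqrt_mul hρ ?_ ?_ ?_ (h.trans cauchy_schwarz)
  · exact integral_nonneg_of_ae <| by filter_upwards [hZ0, hmin0] with ω using mul_nonneg
  · exact integral_nonneg_of_ae <| by filter_upwards [hZ0, hmax0] with ω using mul_nonneg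
  · rw [integral_div, mul_div_cancel₀ _ two_ne_zero]
    exact integral_mul_min_add_integral_mul_max_le hAint hBint hA hB hZmeas hZ

/-- If `E[Z·√(A·B)] ≥ ρ·E[(A+B)/2]` for jointly-distributed nonnegative integrable
random variables `A`, `B`, a `{0,1}`-valued `Z`, and `ρ ∈ [0,1]`, then
`E[Z·min(A,B)] ≥ (1 - √(1-ρ²))·E[(A+B)/2]`. -/
theorem gm_vs_min_indicator {Ω : Type*} [MeasurableSpace Ω] (P : Measure Ω)
    [IsProbabilityMeasure P]
    (A B Z : Ω → ℝ) (hA : ∀ ω, 0 ≤ A ω) (hB : ∀ ω, 0 ≤ B ω)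
    (hZ : ∀ ω, Z ω = 0 ∨ Z ω = 1) (hZmeas : Measurable Z)
    (hAint : Integrable A P) (hBint : Integrable B P)
    (ρ : ℝ) (hρ0 : 0 ≤ ρ) (hρ1 : ρ ≤ 1)
    (h : ρ * ∫ ω, (A ω + B ω) / 2 ∂P ≤ ∫ ω, Z ω * Real.sqrt (A ω * B ω) ∂P) :
    (1 - Real.sqrt (1 - ρ ^ 2)) * ∫ ω, (A ω + B ω) / 2 ∂P
      ≤ ∫ ω, Z ω * min (A ω) (B ω) ∂P := by
  have hZ01 : ∀ ω, Z ω ∈ Set.Icc 0 1 := fun ω => by rcases hZ ω with hω | hω <;> simp [hω]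
  exact gm_vs_min_indicator_general (.of_forall hA) (.of_forall hB) (.of_forall hZ01)
    hZmeas.aestronglyMeasurable hAint hBint hρ0 h
end
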